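/- Let n, p ≥ 1 be natural numbers. Let X be a random real n×n matrix and Z a random real n×p matrix, defined on a common probability space, such that X and Z are independent and the entries of Z are i.i.d. standard Gaussian. Then for every t > 0, P(⟨X, Z·Zᵀ − p·I_n⟩ > t·‖X‖_F) ≤ 2p/t², where ⟨A,B⟩ = tr(Aᵀ·B), ‖·‖_F is the Frobenius norm, and I_n is the n×n identity matrix. -/

import Mathlib

/-!
For a fixed matrix `x`, the statistic `T = ⟨x, Z·Zᵀ − p·I⟩` is a linear combination, with weights
`x(i,j)`, of the centred products `Z(i,k)·Z(j,k) − δ_{ij}`. Wick's formula for four Gaussian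
entries (`integral_entry_four`) shows that two such products, with indices `(i,j,k)` and
`(i',j',k')`, have covariance `[(i',j',k') = (i,j,k)] + [(i',j',k') = (j,i,k)]`. Hence
`E T² = p (‖x‖_F² + ⟨x, xᵀ⟩) ≤ 2p ‖x‖_F²` (`integral_Tstat_sq_le`), and Chebyshev's inequality
gives the tail bound for fixed `x` (`Tstat_tail_le`). Independence turns the joint law of `(X, Z)`
into a product measure, so integrating this uniform bound over the law of `X` proves the theorem.
-/

open MeasureTheory ProbabilityTheory

/-- The law of an `n × p` matrix with i.i.d. standard Gaussian entries
(as the product Gaussian measure on `Fin n → Fin p → ℝ`). -/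
noncomputable def gaussMat (n p : ℕ) : Measure (Fin n → Fin p → ℝ) :=
  Measure.pi fun _ : Fin n => Measure.pi fun _ : Fin p => gaussianReal 0 1

/-- Squared Frobenius norm `‖A‖_F² = Σ_{i,j} A(i,j)²`. -/
def frobSq {n m : ℕ} (A : Fin n → Fin m → ℝ) : ℝ := ∑ i, ∑ j, A i j ^ 2

/-- `T = ⟨X, Z·Zᵀ − p·I_n⟩` where `⟨A,B⟩ = tr(Aᵀ B) = Σ_{i,j} A(i,j)·B(i,j)`. -/
def Tstat {n p : ℕ} (X : Fin n → Fin n → ℝ) (Z : Fin n → Fin p → ℝ) : ℝ :=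
  ∑ i, ∑ j, X i j * ((∑ k, Z i k * Z j k) - if i = j then (p : ℝ) else 0)

/-! ### Moments of the standard Gaussian -/

lemma gauss_integrable_pow (r : ℕ) : Integrable (fun x : ℝ => x ^ r) (gaussianReal 0 1) := by
  have h := (memLp_id_gaussianReal (μ := 0) (v := 1) (r : NNReal))
  have := h.integrable_norm_pow'
  refine (integrable_norm_iff (by fun_prop)).1 ?_
  simpa using this

lemma gauss_moment_one : ∫ x : ℝ, x ^ 1 ∂(gaussianReal 0 1) = 0 := by
  simp

lemma gauss_moment_two : ∫ x : ℝ, x ^ 2 ∂(gaussianReal 0 1) = 1 := by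
  have h := variance_fun_id_gaussianReal (μ := 0) (v := 1)
  rw [variance_of_integral_eq_zero (by fun_prop) (by simp)] at h
  simpa using h

/-- The fourth moment, read off the fourth derivative at `0` of the moment generating function
`exp (t² / 2)`. -/
lemma gauss_moment_four : ∫ x : ℝ, x ^ 4 ∂(gaussianReal 0 1) = 3 := by
  have h := iteratedDeriv_mgf_zero (X := id) (μ := gaussianReal 0 1)
    (by rw [integrableExpSet_id_gaussianReal]; simp) 4
  have key : ∀ q q' r : ℝ → ℝ, (∀ t, HasDerivAt q (q' t) t) → (∀ t, r t = q' t + t * q t) →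
      deriv (fun t : ℝ => q t * Real.exp (t ^ 2 / 2)) =
        fun t => r t * Real.exp (t ^ 2 / 2) := by
    intro q q' r hq hr
    funext t
    have h1 : HasDerivAt (fun t : ℝ => t ^ 2 / 2) t t :=
      ((hasDerivAt_pow 2 t).div_const 2).congr_deriv (by simp)
    have h2 : HasDerivAt (fun t : ℝ => q t * Real.exp (t ^ 2 / 2)) _ t := (hq t).mul h1.exp
    rw [h2.deriv, hr]
    ring
  have h0 : mgf id (gaussianReal 0 1) = fun t : ℝ => (fun _ => 1) t * Real.exp (t ^ 2 / 2) := by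
    rw [mgf_id_gaussianReal]; funext t; simp
  rw [h0] at h
  simp only [iteratedDeriv_succ, iteratedDeriv_zero] at h
  rw [key (fun _ => 1) (fun _ => 0) (fun t => t) (fun t => hasDerivAt_const t 1)
      (fun t => by ring),
    key (fun t => t) (fun _ => 1) (fun t => 1 + t ^ 2) (fun t => hasDerivAt_id t)
      (fun t => by ring),
    key (fun t => 1 + t ^ 2) (fun t => 2 * t) (fun t => 3 * t + t ^ 3)
      (fun t => ((hasDerivAt_pow 2 t).const_add 1).congr_deriv (by simp)) (fun t => by ring),
    key (fun t => 3 * t + t ^ 3) (fun t => 3 + 3 * t ^ 2) (fun t => 3 + 6 * t ^ 2 + t ^ 4)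
      (fun t => (((hasDerivAt_id t).const_mul 3).add (hasDerivAt_pow 3 t)).congr_deriv
        (by norm_num)) (fun t => by ring)] at h
  simpa using h.symm

/-! ### Mixed moments of a Gaussian matrix -/

instance (n p : ℕ) : IsProbabilityMeasure (gaussMat n p) := by
  unfold gaussMat; infer_instance

lemma gaussMat_integrable_monomial {n p : ℕ} (c : Fin n × Fin p → ℕ) :
    Integrable (fun z : Fin n → Fin p → ℝ => ∏ e : Fin n × Fin p, z e.1 e.2 ^ c e)
      (gaussMat n p) := by
  simp only [Fintype.prod_prod_type]
  unfold gaussMat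
  exact Integrable.fintype_prod_dep
    (f := fun i (y : Fin p → ℝ) => ∏ k, y k ^ c (i, k)) fun i =>
      Integrable.fintype_prod_dep (f := fun k (s : ℝ) => s ^ c (i, k)) fun k =>
        gauss_integrable_pow _

lemma gaussMat_integral_monomial {n p : ℕ} (c : Fin n × Fin p → ℕ) :
    ∫ z, ∏ e : Fin n × Fin p, z e.1 e.2 ^ c e ∂(gaussMat n p) =
      ∏ e, ∫ s : ℝ, s ^ c e ∂(gaussianReal 0 1) := by
  simp only [Fintype.prod_prod_type]
  unfold gaussMat
  rw [integral_fintype_prod_eq_prod (fun i (y : Fin p → ℝ) => ∏ k, y k ^ c (i, k))]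
  refine Finset.prod_congr rfl fun i _ => ?_
  rw [integral_fintype_prod_eq_prod (fun k (s : ℝ) => s ^ c (i, k))]

lemma entry_mul_eq_monomial {n p : ℕ} (a b : Fin n × Fin p) (z : Fin n → Fin p → ℝ) :
    z a.1 a.2 * z b.1 b.2 =
      ∏ e : Fin n × Fin p,
        z e.1 e.2 ^ ((if e = a then 1 else 0) + if e = b then 1 else 0) := by
  simp only [pow_add, Finset.prod_mul_distrib, pow_ite, pow_one, pow_zero,
    Finset.prod_ite_eq', Finset.mem_univ, if_true]

lemma entry_mul_four_eq_monomial {n p : ℕ} (a b c d : Fin n × Fin p) (z : Fin n → Fin p → ℝ) :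
    z a.1 a.2 * z b.1 b.2 * (z c.1 c.2 * z d.1 d.2) =
      ∏ e : Fin n × Fin p,
        z e.1 e.2 ^ (((if e = a then 1 else 0) + if e = b then 1 else 0) +
          ((if e = c then 1 else 0) + if e = d then 1 else 0)) := by
  simp only [pow_add _ (_ + _) (_ + _), Finset.prod_mul_distrib, ← entry_mul_eq_monomial]

lemma integrable_entry_two {n p : ℕ} (a b : Fin n × Fin p) :
    Integrable (fun z : Fin n → Fin p → ℝ => z a.1 a.2 * z b.1 b.2) (gaussMat n p) := by
  simp only [entry_mul_eq_monomial]
  exact gaussMat_integrable_monomial _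

lemma integrable_entry_four {n p : ℕ} (a b c d : Fin n × Fin p) :
    Integrable (fun z : Fin n → Fin p → ℝ =>
      z a.1 a.2 * z b.1 b.2 * (z c.1 c.2 * z d.1 d.2)) (gaussMat n p) := by
  simp only [entry_mul_four_eq_monomial]
  exact gaussMat_integrable_monomial _

lemma prod_moment_eq_zero {n p : ℕ} {c : Fin n × Fin p → ℕ} (e : Fin n × Fin p) (h : c e = 1) :
    ∏ e, ∫ s : ℝ, s ^ c e ∂(gaussianReal 0 1) = 0 :=
  Finset.prod_eq_zero (Finset.mem_univ e) (by rw [h]; exact gauss_moment_one)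

lemma prod_moment_eq_one {n p : ℕ} {c : Fin n × Fin p → ℕ} (h : ∀ e, c e = 0 ∨ c e = 2) :
    ∏ e, ∫ s : ℝ, s ^ c e ∂(gaussianReal 0 1) = 1 :=
  Finset.prod_eq_one fun e _ => by
    rcases h e with h | h
    · simp [h]
    · rw [h]; exact gauss_moment_two

lemma integral_entry_two {n p : ℕ} (a b : Fin n × Fin p) :
    ∫ z, z a.1 a.2 * z b.1 b.2 ∂(gaussMat n p) = if a = b then 1 else 0 := by
  simp only [entry_mul_eq_monomial]
  rw [gaussMat_integral_monomial]
  split_ifs with h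
  · exact prod_moment_eq_one fun e => by grind
  · exact prod_moment_eq_zero a (by grind)

/-- Wick's formula for four entries of a Gaussian matrix. The mixed moment is a product of
one-dimensional moments; it vanishes as soon as some entry occurs exactly once, so only the
pairings and the full coincidence `a = b = c = d` (with value `3`) contribute. -/
lemma integral_entry_four {n p : ℕ} (a b c d : Fin n × Fin p) :
    ∫ z, z a.1 a.2 * z b.1 b.2 * (z c.1 c.2 * z d.1 d.2) ∂(gaussMat n p) =
      (if a = b then 1 else 0) * (if c = d then 1 else 0) +
        ((if a = c ∧ b = d then 1 else 0) + (if a = d ∧ b = c then 1 else 0)) := by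
  simp only [entry_mul_four_eq_monomial]
  rw [gaussMat_integral_monomial]
  by_cases hab : a = b
  · by_cases hcd : c = d
    · by_cases hac : a = c
      · subst hab hcd hac
        rw [Finset.prod_eq_single a]
        · simp only [if_true, and_self, Nat.reduceAdd]
          rw [gauss_moment_four]; norm_num
        · intro e _ he; simp [he]
        · simp
      · rw [prod_moment_eq_one fun e => by grind]
        grind
    · by_cases hac : a = c
      · rw [prod_moment_eq_zero d (by grind)]; grind
      · rw [prod_moment_eq_zero c (by grind)]; grind
  · by_cases hac : a = c
    · by_cases hbd : b = d
      · rw [prod_moment_eq_one fun e => by grind]; grind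
      · rw [prod_moment_eq_zero b (by grind)]; grind
    · by_cases had : a = d
      · by_cases hbc : b = c
        · rw [prod_moment_eq_one fun e => by grind]; grind
        · rw [prod_moment_eq_zero b (by grind)]; grind
      · rw [prod_moment_eq_zero a (by grind)]; grind

/-! ### The second moment of the quadratic form -/

/-- The centred product `Z(i,k)·Z(j,k) − δ_{ij}`, indexed by `e = (i, j, k)`. -/
def centredProd {n p : ℕ} (e : Fin n × Fin n × Fin p) (z : Fin n → Fin p → ℝ) : ℝ :=
  z e.1 e.2.2 * z e.2.1 e.2.2 - if e.1 = e.2.1 then 1 else 0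

lemma Tstat_eq_sum {n p : ℕ} (x : Fin n → Fin n → ℝ) (z : Fin n → Fin p → ℝ) :
    Tstat x z = ∑ e : Fin n × Fin n × Fin p, x e.1 e.2.1 * centredProd e z := by
  simp only [Tstat, centredProd, Fintype.sum_prod_type]
  refine Finset.sum_congr rfl fun i _ => Finset.sum_congr rfl fun j _ => ?_
  rw [← Finset.mul_sum, Finset.sum_sub_distrib]
  split_ifs <;> simp

lemma centredProd_mul {n p : ℕ} (e f : Fin n × Fin n × Fin p) (z : Fin n → Fin p → ℝ) :
    centredProd e z * centredProd f z =
      z e.1 e.2.2 * z e.2.1 e.2.2 * (z f.1 f.2.2 * z f.2.1 f.2.2)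
      - (if f.1 = f.2.1 then 1 else 0) * (z e.1 e.2.2 * z e.2.1 e.2.2)
      - (if e.1 = e.2.1 then 1 else 0) * (z f.1 f.2.2 * z f.2.1 f.2.2)
      + (if e.1 = e.2.1 then 1 else 0) * (if f.1 = f.2.1 then 1 else 0) := by
  unfold centredProd; ring

lemma integrable_centredProd_mul {n p : ℕ} (e f : Fin n × Fin n × Fin p) :
    Integrable (fun z => centredProd e z * centredProd f z) (gaussMat n p) := by
  simp only [centredProd_mul]
  have h4 := integrable_entry_four (e.1, e.2.2) (e.2.1, e.2.2) (f.1, f.2.2) (f.2.1, f.2.2)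
  have he := integrable_entry_two (e.1, e.2.2) (e.2.1, e.2.2)
  have hf := integrable_entry_two (f.1, f.2.2) (f.2.1, f.2.2)
  exact ((h4.sub (he.const_mul _)).sub (hf.const_mul _)).add (integrable_const _)

/-- The centred products are uncorrelated up to the symmetry `(i, j, k) ↦ (j, i, k)`. -/
lemma integral_centredProd_mul {n p : ℕ} (e f : Fin n × Fin n × Fin p) :
    ∫ z, centredProd e z * centredProd f z ∂(gaussMat n p) =
      (if f = e then 1 else 0) + (if f = (e.2.1, e.1, e.2.2) then 1 else 0) := by
  simp only [centredProd_mul]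
  have h4 := integrable_entry_four (e.1, e.2.2) (e.2.1, e.2.2) (f.1, f.2.2) (f.2.1, f.2.2)
  have he := integrable_entry_two (e.1, e.2.2) (e.2.1, e.2.2)
  have hf := integrable_entry_two (f.1, f.2.2) (f.2.1, f.2.2)
  have i4 := integral_entry_four (e.1, e.2.2) (e.2.1, e.2.2) (f.1, f.2.2) (f.2.1, f.2.2)
  have ie := integral_entry_two (e.1, e.2.2) (e.2.1, e.2.2)
  have jf := integral_entry_two (f.1, f.2.2) (f.2.1, f.2.2)
  rw [integral_add, integral_sub, integral_sub, integral_const_mul, integral_const_mul,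
    i4, ie, jf]
  rotate_left
  · exact h4
  · exact he.const_mul _
  · exact h4.sub (he.const_mul _)
  · exact hf.const_mul _
  · exact (h4.sub (he.const_mul _)).sub (hf.const_mul _)
  · exact integrable_const _
  obtain ⟨i, j, k⟩ := e
  obtain ⟨i', j', k'⟩ := f
  simp only [Prod.mk.injEq, and_true, integral_const, probReal_univ, one_smul]
  have h1 : ((i = i' ∧ k = k') ∧ j = j' ∧ k = k') ↔ (i' = i ∧ j' = j ∧ k' = k) := by grind
  have h2 : ((i = j' ∧ k = k') ∧ j = i' ∧ k = k') ↔ (i' = j ∧ j' = i ∧ k' = k) := by grind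
  simp only [h1, h2]
  ring

lemma Tstat_sq_eq_sum {n p : ℕ} (x : Fin n → Fin n → ℝ) (z : Fin n → Fin p → ℝ) :
    Tstat x z ^ 2 = ∑ e : Fin n × Fin n × Fin p, ∑ f : Fin n × Fin n × Fin p,
      x e.1 e.2.1 * x f.1 f.2.1 * (centredProd e z * centredProd f z) := by
  rw [Tstat_eq_sum, sq, Finset.sum_mul_sum]
  refine Finset.sum_congr rfl fun e _ => Finset.sum_congr rfl fun f _ => ?_
  ring

lemma integrable_Tstat_sq {n p : ℕ} (x : Fin n → Fin n → ℝ) :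
    Integrable (fun z => Tstat x z ^ 2) (gaussMat n p) := by
  simp only [Tstat_sq_eq_sum]
  exact integrable_finsetSum _ fun e _ => integrable_finsetSum _ fun f _ =>
    (integrable_centredProd_mul e f).const_mul _

/-- The exact second moment is `p (‖x‖_F² + ⟨x, xᵀ⟩)`; the bound is `2ab ≤ a² + b²`. -/
lemma integral_Tstat_sq_le {n p : ℕ} (x : Fin n → Fin n → ℝ) :
    ∫ z, Tstat x z ^ 2 ∂(gaussMat n p) ≤ 2 * p * frobSq x := by
  simp only [Tstat_sq_eq_sum]
  rw [integral_finsetSum _ fun e _ => integrable_finsetSum _ fun f _ =>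
    (integrable_centredProd_mul e f).const_mul _]
  have h : ∀ e : Fin n × Fin n × Fin p,
      ∫ z, ∑ f : Fin n × Fin n × Fin p,
        x e.1 e.2.1 * x f.1 f.2.1 * (centredProd e z * centredProd f z) ∂(gaussMat n p) =
      x e.1 e.2.1 ^ 2 + x e.1 e.2.1 * x e.2.1 e.1 := by
    intro e
    rw [integral_finsetSum _ fun f _ => (integrable_centredProd_mul e f).const_mul _]
    simp only [integral_const_mul, integral_centredProd_mul, mul_add, Finset.sum_add_distrib,
      mul_ite, mul_one, mul_zero, Finset.sum_ite_eq', Finset.mem_univ, if_true, sq]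
  rw [Finset.sum_congr rfl fun e _ => h e]
  simp only [Fintype.sum_prod_type, Finset.sum_const, Finset.card_univ, Fintype.card_fin,
    nsmul_eq_mul]
  simp only [← Finset.mul_sum]
  have h2 : ∑ i, ∑ j, (x i j ^ 2 + x i j * x j i) ≤
      ∑ i, ∑ j, (3 / 2 * x i j ^ 2 + 1 / 2 * x j i ^ 2) :=
    Finset.sum_le_sum fun i _ => Finset.sum_le_sum fun j _ => by
      nlinarith [sq_nonneg (x i j - x j i)]
  have h3 : ∑ i, ∑ j, (3 / 2 * x i j ^ 2 + 1 / 2 * x j i ^ 2) = 2 * frobSq x := by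
    simp only [Finset.sum_add_distrib, ← Finset.mul_sum, frobSq]
    rw [Finset.sum_comm (f := fun i j => x j i ^ 2)]
    ring
  rw [h3] at h2
  nlinarith [mul_le_mul_of_nonneg_left h2 (Nat.cast_nonneg (α := ℝ) p)]

/-! ### Chebyshev's inequality, first for a deterministic matrix -/

lemma Tstat_tail_le {n p : ℕ} (x : Fin n → Fin n → ℝ) {t : ℝ} (ht : 0 < t) :
    gaussMat n p {z | t * Real.sqrt (frobSq x) < Tstat x z} ≤
      ENNReal.ofReal (2 * p / t ^ 2) := by
  have hF : 0 ≤ frobSq x := Finset.sum_nonneg fun i _ => Finset.sum_nonneg fun j _ => sq_nonneg _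
  rcases hF.eq_or_lt with h0 | hpos
  · -- `‖x‖_F = 0` forces `x = 0`, and then the strict inequality reads `0 < 0`.
    have hx : ∀ i j, x i j = 0 := by
      intro i j
      have h1 := (Finset.sum_eq_zero_iff_of_nonneg
        fun i _ => Finset.sum_nonneg fun j _ => sq_nonneg (x i j)).1 h0.symm i (Finset.mem_univ i)
      have h2 := (Finset.sum_eq_zero_iff_of_nonneg
        fun j _ => sq_nonneg (x i j)).1 h1 j (Finset.mem_univ j)
      exact pow_eq_zero_iff two_ne_zero |>.1 h2
    simp [← h0, Tstat, hx]
  · have hc : 0 < t ^ 2 * frobSq x := by positivity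
    have hsub : {z : Fin n → Fin p → ℝ | t * Real.sqrt (frobSq x) < Tstat x z} ⊆
        {z | t ^ 2 * frobSq x ≤ Tstat x z ^ 2} := by
      intro z hz
      have hz' : t * Real.sqrt (frobSq x) < Tstat x z := hz
      have := pow_le_pow_left₀ (by positivity) hz'.le 2
      rwa [mul_pow, Real.sq_sqrt hF] at this
    have hM := mul_meas_ge_le_integral_of_nonneg (μ := gaussMat n p)
      (Filter.Eventually.of_forall fun z => sq_nonneg (Tstat x z))
      (integrable_Tstat_sq x) (t ^ 2 * frobSq x)
    refine (measure_mono hsub).trans ?_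
    rw [← ofReal_measureReal]
    refine ENNReal.ofReal_le_ofReal ?_
    rw [le_div_iff₀ (by positivity)]
    have := hM.trans (integral_Tstat_sq_le x)
    nlinarith

lemma measurable_frobSq {n m : ℕ} : Measurable (frobSq : (Fin n → Fin m → ℝ) → ℝ) := by
  unfold frobSq; fun_prop

lemma measurable_Tstat {n p : ℕ} :
    Measurable fun q : (Fin n → Fin n → ℝ) × (Fin n → Fin p → ℝ) => Tstat q.1 q.2 := by
  unfold Tstat; fun_prop

/-- if `X` is a random `n × n` matrix independent of a random `n × p`
matrix `Z` with i.i.d. standard Gaussian entries, then for every `t > 0`,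
`P(⟨X, ZZᵀ − pI⟩ > t‖X‖_F) ≤ 2p/t²`. -/
theorem gaussian_quadratic_form_chebyshev
    {Ω : Type*} [MeasurableSpace Ω] (P : Measure Ω) [IsProbabilityMeasure P]
    (n p : ℕ) (hn : 1 ≤ n) (hp : 1 ≤ p)
    (X : Ω → Fin n → Fin n → ℝ) (Z : Ω → Fin n → Fin p → ℝ)
    (hX : Measurable X) (hZ : Measurable Z)
    (hindep : IndepFun X Z P) (hlaw : P.map Z = gaussMat n p)
    (t : ℝ) (ht : 0 < t) :
    P {ω | t * Real.sqrt (frobSq (X ω)) < Tstat (X ω) (Z ω)} ≤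
      ENNReal.ofReal (2 * p / t ^ 2) := by
  -- By independence the joint law of `(X, Z)` is a product, so the deterministic bound
  -- integrates over the law of `X`.
  have hjoint : P.map (fun ω => (X ω, Z ω)) = (P.map X).prod (gaussMat n p) := by
    rw [← hlaw]
    exact (indepFun_iff_map_prod_eq_prod_map_map hX.aemeasurable hZ.aemeasurable).1 hindep
  have : IsProbabilityMeasure (P.map X) := Measure.isProbabilityMeasure_map hX.aemeasurable
  have hS : MeasurableSet {q : (Fin n → Fin n → ℝ) × (Fin n → Fin p → ℝ) |
      t * Real.sqrt (frobSq q.1) < Tstat q.1 q.2} :=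
    measurableSet_lt ((measurable_frobSq.comp measurable_fst).sqrt.const_mul t) measurable_Tstat
  have hP : P {ω | t * Real.sqrt (frobSq (X ω)) < Tstat (X ω) (Z ω)} =
      P.map (fun ω => (X ω, Z ω)) {q | t * Real.sqrt (frobSq q.1) < Tstat q.1 q.2} := by
    rw [Measure.map_apply (hX.prodMk hZ) hS]; rfl
  rw [hP, hjoint, Measure.prod_apply hS]
  calc _ ≤ ∫⁻ _, ENNReal.ofReal (2 * p / t ^ 2) ∂(P.map X) :=
        lintegral_mono fun x => Tstat_tail_le x ht
    _ = _ := by simp
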